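/- arXiv:2602.09429 — 5 statements merged into one kernel-verified Lean document; each statement's English description precedes it below -/
import Mathlib

section
/- Suppose σ0(w) > 0 for all w ∈ ℝ and that there exist constants μ̄_min, μ̄_max > 0 with μ̄_min ≤ μ(w)/σ0(w) ≤ μ̄_max for all w ∈ ℝ. Let v : [0,∞) → ℝ be continuous and let z : [0,∞) → ℝ be the solution of the lumped FrBD bristle ODE ż(t) = -(σ0(v(t)) |v(t)|_ε / g(v(t))) z(t) + (μ(v(t))/g(v(t))) v(t) with initial condition z(0) = z₀ satisfying |z₀| ≤ μ̄_max. Then |z(t)| ≤ μ̄_max for all t ≥ 0. -/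
open Set

/-!
The bristle equation has the form `z' = -a z + b` with decay rate `a = σ0(v) |v|_ε / g(v) ≥ 0` and
forcing `b = μ(v) v / g(v)`. Since `|v| ≤ |v|_ε` and `μ ≤ μ̄_max σ0`, the forcing satisfies
`|b| ≤ a μ̄_max`. Hence `|z|²` cannot increase while `|z| > μ̄_max`, and `[-μ̄_max, μ̄_max]` is
forward invariant.
-/

theorem image_le_of_deriv_right_nonpos_of_lt {f f' : ℝ → ℝ} {a b M : ℝ}
    (hf : ContinuousOn f (Icc a b))
    (hf' : ∀ x ∈ Ico a b, HasDerivWithinAt f (f' x) (Ici x) x)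
    (ha : f a ≤ M) (hnonpos : ∀ x ∈ Ico a b, M < f x → f' x ≤ 0) :
    ∀ ⦃x⦄, x ∈ Icc a b → f x ≤ M := by
  -- Mathlib's fencing lemma needs a strict inequality on the boundary, so compare `f` with
  -- lines of slope `δ > 0` starting just above `M`, and let `δ → 0`.
  have below_line : ∀ δ > 0, ∀ ⦃x⦄, x ∈ Icc a b → f x ≤ M + δ * (1 + (x - a)) := by
    intro δ hδ
    refine image_le_of_deriv_right_lt_deriv_boundary hf hf' (B' := fun _ ↦ δ) ?_ ?_ ?_
    · linarith
    · intro x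
      simpa only [id_eq, mul_one] using
        ((((hasDerivAt_id x).sub_const a).const_add 1).const_mul δ).const_add M
    · intro x hx hfx
      have above : 0 < δ * (1 + (x - a)) := mul_pos hδ (by linarith [hx.1])
      exact (hnonpos x hx (by linarith)).trans_lt hδ
  intro x hx
  have hlen : 0 < 1 + (x - a) := by linarith [hx.1]
  refine le_of_forall_pos_le_add fun η hη ↦ ?_
  simpa only [div_mul_cancel₀ η hlen.ne'] using below_line (η / (1 + (x - a))) (div_pos hη hlen) hx

section LinearODE

variable {E : Type*} [NormedAddCommGroup E] [InnerProductSpace ℝ E]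

theorem inner_neg_smul_add_nonpos {a M : ℝ} {x b : E} (ha : 0 ≤ a) (hb : ‖b‖ ≤ a * M)
    (hx : M ≤ ‖x‖) : inner ℝ x (-a • x + b) ≤ 0 :=
  calc
    inner ℝ x (-a • x + b) = -a * ‖x‖ ^ 2 + inner ℝ x b := by
      rw [inner_add_right, real_inner_smul_right, real_inner_self_eq_norm_sq]
    _ ≤ -a * ‖x‖ ^ 2 + ‖x‖ * (a * M) := by
      gcongr
      exact (real_inner_le_norm x b).trans (by gcongr)
    _ = -(a * ‖x‖ * (‖x‖ - M)) := by ring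
    _ ≤ 0 := neg_nonpos.2 (mul_nonneg (by positivity) (sub_nonneg.2 hx))

theorem norm_le_of_hasDerivWithinAt_neg_smul_add {z b : ℝ → E} {a : ℝ → ℝ} {t₀ t₁ M : ℝ}
    (hz : ContinuousOn z (Icc t₀ t₁))
    (hz' : ∀ t ∈ Ico t₀ t₁, HasDerivWithinAt z (-a t • z t + b t) (Ici t) t)
    (ha : ∀ t ∈ Ico t₀ t₁, 0 ≤ a t) (hb : ∀ t ∈ Ico t₀ t₁, ‖b t‖ ≤ a t * M)
    (h₀ : ‖z t₀‖ ≤ M) : ∀ ⦃t⦄, t ∈ Icc t₀ t₁ → ‖z t‖ ≤ M := by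
  intro t ht
  have hM : 0 ≤ M := (norm_nonneg _).trans h₀
  have norm_sq_le : ‖z t‖ ^ 2 ≤ M ^ 2 := by
    refine image_le_of_deriv_right_nonpos_of_lt (hz.norm.pow 2)
      (fun s hs ↦ (hz' s hs).norm_sq) (pow_le_pow_left₀ (norm_nonneg _) h₀ 2)
      (fun s hs hMs ↦ ?_) ht
    have outside : M ≤ ‖z s‖ := (lt_of_pow_lt_pow_left₀ 2 (norm_nonneg _) hMs).le
    exact mul_nonpos_of_nonneg_of_nonpos zero_le_two
      (inner_neg_smul_add_nonpos (ha s hs) (hb s hs) outside)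
  exact le_of_sq_le_sq norm_sq_le hM

end LinearODE

theorem abs_div_mul_le_of_div_le {m s c w r M : ℝ} (hm : 0 ≤ m) (hs : 0 < s) (hc : 0 ≤ c)
    (hw : |w| ≤ r) (hM : m / s ≤ M) : |m / c * w| ≤ s * r / c * M :=
  calc
    |m / c * w| = m / c * |w| := by rw [abs_mul, abs_of_nonneg (div_nonneg hm hc)]
    _ ≤ M * s / c * r := by
      have hms : m ≤ M * s := (div_le_iff₀ hs).1 hM
      have hMs : 0 ≤ M * s := hm.trans hms
      gcongr
    _ = s * r / c * M := by ring

theorem frbd_lumped_stability_general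
    {ε : ℝ} (hε : 0 ≤ ε) {μ σ0 σ1 g : ℝ → ℝ}
    (hμ : ∀ w, 0 < μ w) (hσ0 : ∀ w, 0 < σ0 w) (hσ1 : ∀ w, 0 ≤ σ1 w)
    (hg : ∀ w, g w = σ1 w * Real.sqrt (w ^ 2 + ε) + μ w)
    {M : ℝ} (hratio : ∀ w, μ w / σ0 w ≤ M)
    {v z : ℝ → ℝ} (hz₀ : |z 0| ≤ M)
    (hODE : ∀ t ∈ Ici (0 : ℝ),
      HasDerivWithinAt z
        (-(σ0 (v t) * Real.sqrt ((v t) ^ 2 + ε) / g (v t)) * z t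
          + (μ (v t) / g (v t)) * v t) (Ici 0) t) :
    ∀ t ∈ Ici (0 : ℝ), |z t| ≤ M := by
  intro t ht
  have hg_nonneg (w : ℝ) : 0 ≤ g w := by
    rw [hg]
    exact add_nonneg (mul_nonneg (hσ1 w) (Real.sqrt_nonneg _)) (hμ w).le
  have abs_le_regularized (w : ℝ) : |w| ≤ Real.sqrt (w ^ 2 + ε) :=
    Real.abs_le_sqrt (le_add_of_nonneg_right hε)
  have hz : ContinuousOn z (Icc 0 t) := fun s hs ↦
    (hODE s hs.1).continuousWithinAt.mono Icc_subset_Ici_self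
  have hz' : ∀ s ∈ Ico 0 t, HasDerivWithinAt z _ (Ici s) s := fun s hs ↦
    (hODE s hs.1).mono (Ici_subset_Ici.2 hs.1)
  refine norm_le_of_hasDerivWithinAt_neg_smul_add hz hz' (fun s _ ↦ ?_) (fun s _ ↦ ?_) hz₀
    (right_mem_Icc.2 ht)
  · exact div_nonneg (mul_nonneg (hσ0 _).le (Real.sqrt_nonneg _)) (hg_nonneg _)
  · exact abs_div_mul_le_of_div_le (hμ _).le (hσ0 _) (hg_nonneg _) (abs_le_regularized _)
      (hratio _)

/-- Stability (invariance) of the lumped FrBD bristle ODE: if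
`μ̄_min ≤ μ(w)/σ0(w) ≤ μ̄_max` for all `w` and the initial condition satisfies
`|z₀| ≤ μ̄_max`, then `|z(t)| ≤ μ̄_max` for all `t ≥ 0`. -/
theorem frbd_lumped_stability
    (ε μmin : ℝ) (hε : 0 < ε) (hμmin : 0 < μmin)
    (μ σ0 σ1 : ℝ → ℝ)
    (hμ : ContDiff ℝ 1 μ) (hμlb : ∀ w, μmin ≤ μ w)
    (hσ0 : ContDiff ℝ 1 σ0) (hσ0pos : ∀ w, 0 < σ0 w)
    (hσ1 : ContDiff ℝ 1 σ1) (hσ1nn : ∀ w, 0 ≤ σ1 w)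
    (g : ℝ → ℝ) (hg : ∀ w, g w = σ1 w * Real.sqrt (w ^ 2 + ε) + μ w)
    (μbmin μbmax : ℝ) (hμbmin : 0 < μbmin) (hμbmax : 0 < μbmax)
    (hratio : ∀ w, μbmin ≤ μ w / σ0 w ∧ μ w / σ0 w ≤ μbmax)
    (v : ℝ → ℝ) (hv : ContinuousOn v (Ici 0))
    (z : ℝ → ℝ) (z₀ : ℝ) (hz0 : z 0 = z₀) (hz0bd : |z₀| ≤ μbmax)
    (hODE : ∀ t ∈ Ici (0 : ℝ),
      HasDerivWithinAt z
        (-(σ0 (v t) * Real.sqrt ((v t) ^ 2 + ε) / g (v t)) * z t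
          + (μ (v t) / g (v t)) * v t) (Ici 0) t) :
    ∀ t ∈ Ici (0 : ℝ), |z t| ≤ μbmax :=
  frbd_lumped_stability_general hε.le (fun w ↦ hμmin.trans_le (hμlb w)) hσ0pos hσ1nn hg
    (fun w ↦ (hratio w).2) (hz0 ▸ hz0bd) hODE
end

section
/- Suppose σ0(w) = σ0 > 0 is constant. Let v : [0,T] → ℝ be continuous, let z : [0,T] → ℝ solve the lumped FrBD bristle ODE, define the bristle force F_b(t) := p·(σ0 z(t) + σ1(v(t)) ż(t)) with p > 0, set Σ0 := σ0 p and W(z) := (Σ0/2) z². Then for all t ∈ (0,T): F_b(t) v(t) - d/dt[W(z(t))] = Σ0 σ0 (|v(t)|_ε / g(v(t))) z(t)² + p σ1(v(t)) (μ(v(t))/g(v(t))) v(t)²; in particular F_b(t) v(t) ≥ d/dt[W(z(t))]. -/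
open Set

/-!
Differentiating `W ∘ z` and inserting the bristle equation makes `⟪F_b, v⟫ - d/dt W(z)` a quadratic
form in `(z, v)`. Its cross term is `σ0 p (1 - (σ1 |v|_ε + μ) / g) ⟪z, v⟫`, which vanishes precisely
because `g = σ1 |v|_ε + μ`; the two remaining squares have nonnegative coefficients.
-/

noncomputable section Bristle

variable {σ0 p σ1 a μ g : ℝ}

section Defs

variable {E : Type*} [AddCommMonoid E] [Module ℝ E]

/-- The right-hand side of the lumped FrBD bristle equation at one instant, for sliding velocity `v`
and bristle deflection `w`. The real numbers `a`, `μ`, `g` are the values `|v|_ε`, `μ(v)`, `g(v)`,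
so that the algebra does not depend on how they vary with `v`. -/
def bristleRate (σ0 a μ g : ℝ) (v w : E) : E :=
  -(σ0 * a / g) • w + (μ / g) • v

/-- The bristle force `F_b` at deflection `w` with deflection rate `w'`; `σ1` is the value of the
micro-damping at the current velocity. -/
def bristleForce (p σ0 σ1 : ℝ) (w w' : E) : E :=
  p • (σ0 • w + σ1 • w')

end Defs

/-- The elastic energy `W` stored in bristles of stiffness `Sigma0` at deflection `w`. -/
def bristleEnergy {E : Type*} [Norm E] (Sigma0 : ℝ) (w : E) : ℝ :=
  Sigma0 / 2 * ‖w‖ ^ 2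

/-- The power dissipated by the bristles: a micro-stiffness part, quadratic in the deflection `w`,
and a micro-damping part, quadratic in the velocity `v`. The coefficients `σ1`, `a`, `μ`, `g` are
values at the current velocity, as in `bristleRate`. -/
def bristleDissipation {E : Type*} [Norm E] (σ0 p σ1 a μ g : ℝ) (v w : E) : ℝ :=
  σ0 * p * σ0 * (a / g) * ‖w‖ ^ 2 + p * σ1 * (μ / g) * ‖v‖ ^ 2

theorem bristleDissipation_nonneg {E : Type*} [Norm E] {v w : E} (hp : 0 ≤ p) (hσ1 : 0 ≤ σ1)
    (ha : 0 ≤ a) (hμ : 0 ≤ μ) (hg : 0 ≤ g) :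
    0 ≤ bristleDissipation σ0 p σ1 a μ g v w := by
  have stiffness_nonneg : 0 ≤ σ0 * p * σ0 := by
    rw [mul_right_comm]
    exact mul_nonneg (mul_self_nonneg σ0) hp
  unfold bristleDissipation
  positivity

variable {E : Type*} [NormedAddCommGroup E] [InnerProductSpace ℝ E]

theorem hasDerivAt_bristleEnergy {Sigma0 t : ℝ} {z : ℝ → E} {z' : E} (hz : HasDerivAt z z' t) :
    HasDerivAt (fun s => bristleEnergy Sigma0 (z s)) (Sigma0 * inner ℝ (z t) z') t :=
  (hz.norm_sq.const_mul (Sigma0 / 2)).congr_deriv (by ring)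

theorem inner_bristleForce_sub_inner_bristleRate {v w : E} (hg : g = σ1 * a + μ) (hg0 : g ≠ 0) :
    inner ℝ (bristleForce p σ0 σ1 w (bristleRate σ0 a μ g v w)) v
        - σ0 * p * inner ℝ w (bristleRate σ0 a μ g v w) =
      bristleDissipation σ0 p σ1 a μ g v w := by
  have cross_coeff : 1 - (σ1 * a + μ) / g = 0 := by rw [← hg, div_self hg0, sub_self]
  calc
    _ = bristleDissipation σ0 p σ1 a μ g v w
          + σ0 * p * (1 - (σ1 * a + μ) / g) * inner ℝ w v := by
      simp only [bristleForce, bristleRate, bristleDissipation, inner_add_left, inner_add_right,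
        real_inner_smul_left, real_inner_smul_right, real_inner_self_eq_norm_sq]
      ring
    _ = bristleDissipation σ0 p σ1 a μ g v w := by rw [cross_coeff, mul_zero, zero_mul, add_zero]

/-- `N` plays the role of the regularized absolute value `|·|_ε`. -/
theorem frbd_lumped_energy_balance_general
    (hp : 0 ≤ p) {μ σ1 N g : E → ℝ} (hμ : ∀ w, 0 < μ w) (hσ1 : ∀ w, 0 ≤ σ1 w)
    (hN : ∀ w, 0 ≤ N w) (hg : ∀ w, g w = σ1 w * N w + μ w) {S : Set ℝ} {v z : ℝ → E}
    (hODE : ∀ t ∈ S,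
      HasDerivWithinAt z (bristleRate σ0 (N (v t)) (μ (v t)) (g (v t)) (v t) (z t)) S t) :
    ∀ t ∈ interior S,
      inner ℝ (bristleForce p σ0 (σ1 (v t)) (z t) (deriv z t)) (v t)
          - deriv (fun s => bristleEnergy (σ0 * p) (z s)) t =
        bristleDissipation σ0 p (σ1 (v t)) (N (v t)) (μ (v t)) (g (v t)) (v t) (z t) ∧
      deriv (fun s => bristleEnergy (σ0 * p) (z s)) t ≤
        inner ℝ (bristleForce p σ0 (σ1 (v t)) (z t) (deriv z t)) (v t) := by
  intro t ht
  have hz := (hODE t (interior_subset ht)).hasDerivAt (mem_interior_iff_mem_nhds.mp ht)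
  have g_pos : 0 < g (v t) := by
    rw [hg]
    exact add_pos_of_nonneg_of_pos (mul_nonneg (hσ1 _) (hN _)) (hμ _)
  have balance := inner_bristleForce_sub_inner_bristleRate (σ0 := σ0) (p := p) (v := v t)
    (w := z t) (hg (v t)) g_pos.ne'
  rw [← (hasDerivAt_bristleEnergy hz).deriv, ← hz.deriv] at balance
  refine ⟨balance, sub_nonneg.mp ?_⟩
  rw [balance]
  exact bristleDissipation_nonneg hp (hσ1 _) (hN _) (hμ _).le g_pos.le

end Bristle

/-- Pointwise energy balance for the lumped FrBD model with constant micro-stiffness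
`σ0 > 0`: along any solution `z` of the bristle ODE, with `F_b = p (σ0 z + σ1(v) ż)`,
`Sigma0 = σ0 p` and `W(z) = (Sigma0/2) z²`, one has
`F_b v - d/dt W(z(t)) = Sigma0 σ0 (|v|_ε/g(v)) z² + p σ1(v) (μ(v)/g(v)) v²`,
and in particular `F_b v ≥ d/dt W(z(t))`. -/
theorem frbd_lumped_energy_balance
    (T ε μmin σ0 p : ℝ) (hT : 0 < T) (hε : 0 < ε) (hμmin : 0 < μmin)
    (hσ0 : 0 < σ0) (hp : 0 < p)
    (μ σ1 : ℝ → ℝ)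
    (hμ : ContDiff ℝ 1 μ) (hμlb : ∀ w, μmin ≤ μ w)
    (hσ1 : ContDiff ℝ 1 σ1) (hσ1nn : ∀ w, 0 ≤ σ1 w)
    (g : ℝ → ℝ) (hg : ∀ w, g w = σ1 w * Real.sqrt (w ^ 2 + ε) + μ w)
    (v : ℝ → ℝ) (hv : ContinuousOn v (Icc 0 T))
    (z : ℝ → ℝ)
    (hODE : ∀ t ∈ Icc 0 T,
      HasDerivWithinAt z
        (-(σ0 * Real.sqrt ((v t) ^ 2 + ε) / g (v t)) * z t
          + (μ (v t) / g (v t)) * v t) (Icc 0 T) t)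
    (Fb : ℝ → ℝ) (hFb : ∀ t, Fb t = p * (σ0 * z t + σ1 (v t) * deriv z t))
    (Sigma0 : ℝ) (hSigma0 : Sigma0 = σ0 * p)
    (W : ℝ → ℝ) (hW : ∀ x, W x = Sigma0 / 2 * x ^ 2) :
    ∀ t ∈ Ioo 0 T,
      Fb t * v t - deriv (fun s => W (z s)) t =
        Sigma0 * σ0 * (Real.sqrt ((v t) ^ 2 + ε) / g (v t)) * z t ^ 2
          + p * σ1 (v t) * (μ (v t) / g (v t)) * v t ^ 2 ∧
      deriv (fun s => W (z s)) t ≤ Fb t * v t := by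
  have balance := frbd_lumped_energy_balance_general (N := fun w => Real.sqrt (w ^ 2 + ε)) hp.le
    (fun w => hμmin.trans_le (hμlb w)) hσ1nn (fun _ => Real.sqrt_nonneg _) hg hODE
  simpa only [interior_Icc, bristleForce, bristleEnergy, bristleDissipation, smul_eq_mul,
    Real.inner_apply, Real.norm_eq_abs, sq_abs, hFb, hW, hSigma0] using balance
end

section
/- Suppose σ0(w) = σ0 > 0 is constant, and let v : [0,∞) → ℝ be continuous with |v(t)| ≤ V_max for all t. Set g_max := sup_{|w| ≤ V_max} g(w), μ̄_max := sup_{|w| ≤ V_max} μ(w)/σ0, and λ := σ0 √ε / g_max > 0. Then the solution z of the lumped FrBD bristle ODE with z(0) = z₀ satisfies the input-to-state estimate |z(t)| ≤ e^{-λ t} |z₀| + μ̄_max for all t ≥ 0. -/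
open Set

/-!
A damped linear equation `z' = -a z + b` obeys the upper Dini inequality `‖z‖' ≤ -a ‖z‖ + ‖b‖`,
because `z + h z' = (1 - h a) z + h b` and `1 - h a ≥ 0` for small `h > 0`. If `‖b‖ ≤ a M` and
`a ≥ lam > 0`, then `‖z‖` cannot cross `exp (-lam t) ‖z 0‖ + M + δ` for any `δ > 0`. For the bristle
equation with `a = σ0 |v|_ε / g(v)` and `b = (μ(v) / g(v)) v`, the bound `‖b‖ ≤ a M` with
`M = sup μ / σ0` is `|v| ≤ |v|_ε`, and `a ≥ lam` is `√ε ≤ |v|_ε` together with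
`g(v) ≤ sup g`.
-/

open Filter Topology

section DampedLinearEquation

variable {E : Type*} [NormedAddCommGroup E] [NormedSpace ℝ E]

theorem eventually_slope_norm_lt_of_hasDerivWithinAt {f : ℝ → E} {f' : E} {x r : ℝ} (a : ℝ)
    (hf : HasDerivWithinAt f f' (Ioi x) x) (hr : ‖f' + a • f x‖ - a * ‖f x‖ < r) :
    ∀ᶠ y in 𝓝[>] x, slope (norm ∘ f) x y < r := by
  have damped_slope_tendsto :
      Tendsto (fun y ↦ ‖slope f x y + a • f x‖) (𝓝[>] x) (𝓝 ‖f' + a • f x‖) :=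
    (((hasDerivWithinAt_iff_tendsto_slope' self_notMem_Ioi).1 hf).add_const _).norm
  have step_tendsto : Tendsto (fun y ↦ (y - x) * a) (𝓝[>] x) (𝓝 0) :=
    tendsto_nhdsWithin_of_tendsto_nhds <| by
      simpa using ((continuous_sub_right x).mul_const a).tendsto x
  filter_upwards [damped_slope_tendsto.eventually_lt_const (show _ < r + a * ‖f x‖ by linarith),
    step_tendsto.eventually_lt_const one_pos, self_mem_nhdsWithin] with y hslope hstep hxy
  have h_pos : 0 < y - x := sub_pos.2 hxy
  have increment : f y = (1 - (y - x) * a) • f x + (y - x) • (slope f x y + a • f x) := by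
    rw [smul_add, sub_smul_slope, vsub_eq_sub]
    module
  have norm_increment :
      ‖f y‖ ≤ (1 - (y - x) * a) * ‖f x‖ + (y - x) * ‖slope f x y + a • f x‖ := by
    calc ‖f y‖ ≤ _ := increment ▸ norm_add_le _ _
      _ = _ := by
        rw [norm_smul_of_nonneg (sub_nonneg.2 hstep.le), norm_smul_of_nonneg h_pos.le]
  rw [slope_def_field, div_lt_iff₀ h_pos]
  simp only [Function.comp_apply]
  nlinarith

theorem norm_le_exp_neg_mul_add_of_hasDerivWithinAt {z b : ℝ → E} {a : ℝ → ℝ} {t₀ lam M : ℝ}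
    (hlam : 0 < lam)
    (hz : ∀ t ∈ Ici t₀, HasDerivWithinAt z (-a t • z t + b t) (Ici t₀) t)
    (ha : ∀ t ∈ Ici t₀, lam ≤ a t) (hb : ∀ t ∈ Ici t₀, ‖b t‖ ≤ a t * M)
    {t : ℝ} (ht : t ∈ Ici t₀) :
    ‖z t‖ ≤ Real.exp (-lam * (t - t₀)) * ‖z t₀‖ + M := by
  have M_nonneg : 0 ≤ M :=
    nonneg_of_mul_nonneg_right ((norm_nonneg _).trans (hb t ht)) (hlam.trans_le (ha t ht))
  refine le_of_forall_pos_le_add fun δ hδ ↦ ?_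
  have barrier_deriv (s : ℝ) :
      HasDerivAt (fun s ↦ Real.exp (-lam * (s - t₀)) * ‖z t₀‖ + M + δ)
        (-lam * (Real.exp (-lam * (s - t₀)) * ‖z t₀‖)) s := by
    have exponent_deriv : HasDerivAt (fun s ↦ -lam * (s - t₀)) (-lam) s := by
      simpa using ((hasDerivAt_id s).sub_const t₀).const_mul (-lam)
    exact (((exponent_deriv.exp.mul_const ‖z t₀‖).add_const M).add_const δ).congr_deriv (by ring)
  refine image_norm_le_of_liminf_right_slope_norm_lt_deriv_boundary
    (f' := fun s ↦ ‖b s‖ - a s * ‖z s‖)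
    (fun s hs ↦ (hz s hs.1).continuousWithinAt.mono Icc_subset_Ici_self) ?slope_norm ?initial
    (fun s _ ↦ (barrier_deriv s).continuousAt.continuousWithinAt)
    (fun s _ ↦ (barrier_deriv s).hasDerivWithinAt) ?no_crossing ⟨ht, le_rfl⟩
  case slope_norm =>
    intro s hs r hr
    refine (eventually_slope_norm_lt_of_hasDerivWithinAt (a s)
      ((hz s hs.1).mono (Ioi_subset_Ici hs.1)) ?_).frequently
    rwa [neg_smul, neg_add_eq_sub, sub_add_cancel]
  case initial =>
    rw [sub_self, mul_zero, Real.exp_zero, one_mul]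
    linarith
  case no_crossing =>
    intro s hs hcross
    have a_pos : 0 < a s := hlam.trans_le (ha s hs.1)
    have decay : lam * (Real.exp (-lam * (s - t₀)) * ‖z t₀‖)
        ≤ a s * (Real.exp (-lam * (s - t₀)) * ‖z t₀‖) := by
      gcongr
      exact ha s hs.1
    rw [hcross]
    linarith [hb s hs.1, mul_pos a_pos hδ]

end DampedLinearEquation

section FrictionModel

variable {E : Type*} [NormedAddCommGroup E]

/-- The regularized norm `|v|_ε = √(‖v‖² + ε)` of a sliding velocity; on `ℝ` it is the regularized
absolute value. -/
noncomputable def regNorm (ε : ℝ) (v : E) : ℝ := √(‖v‖ ^ 2 + ε)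

theorem regNorm_real (ε v : ℝ) : regNorm ε v = √(v ^ 2 + ε) := by
  rw [regNorm, Real.norm_eq_abs, sq_abs]

theorem norm_le_regNorm {ε : ℝ} (hε : 0 ≤ ε) (v : E) : ‖v‖ ≤ regNorm ε v :=
  Real.le_sqrt_of_sq_le (le_add_of_nonneg_right hε)

theorem sqrt_le_regNorm (ε : ℝ) (v : E) : √ε ≤ regNorm ε v :=
  Real.sqrt_le_sqrt (le_add_of_nonneg_left (sq_nonneg _))

theorem norm_bristle_forcing_le [NormedSpace ℝ E] {ε σ0 μ g M : ℝ} {v : E} (hε : 0 ≤ ε)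
    (hσ0 : 0 < σ0) (hμ : 0 ≤ μ) (hg : 0 ≤ g) (hM : μ / σ0 ≤ M) :
    ‖(μ / g) • v‖ ≤ σ0 * regNorm ε v / g * M := by
  have regNorm_nonneg : 0 ≤ regNorm ε v := Real.sqrt_nonneg _
  calc ‖(μ / g) • v‖ = μ / g * ‖v‖ := norm_smul_of_nonneg (div_nonneg hμ hg) v
    _ ≤ μ / g * regNorm ε v := by gcongr; exact norm_le_regNorm hε v
    _ = σ0 * regNorm ε v / g * (μ / σ0) := by field_simp
    _ ≤ σ0 * regNorm ε v / g * M := by gcongr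

theorem frbd_lumped_iss_general [NormedSpace ℝ E] {ε σ0 : ℝ} (hε : 0 < ε) (hσ0 : 0 < σ0)
    {W : Set E} {μ σ1 g : E → ℝ} (hμ : ∀ w ∈ W, 0 < μ w) (hσ1 : ∀ w ∈ W, 0 ≤ σ1 w)
    (hg : ∀ w ∈ W, g w = σ1 w * regNorm ε w + μ w) (hgW : BddAbove (g '' W))
    {v z : ℝ → E} (hv : ∀ t ∈ Ici (0 : ℝ), v t ∈ W)
    (hODE : ∀ t ∈ Ici (0 : ℝ), HasDerivWithinAt z
      (-(σ0 * regNorm ε (v t) / g (v t)) • z t + (μ (v t) / g (v t)) • v t) (Ici 0) t) :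
    0 < σ0 * √ε / sSup (g '' W) ∧ ∀ t ∈ Ici (0 : ℝ),
      ‖z t‖ ≤ Real.exp (-(σ0 * √ε / sSup (g '' W)) * t) * ‖z 0‖
        + sSup ((fun w ↦ μ w / σ0) '' W) := by
  have μ_le_g : ∀ w ∈ W, μ w ≤ g w := fun w hw ↦ by
    rw [hg w hw]
    exact le_add_of_nonneg_left (mul_nonneg (hσ1 w hw) (Real.sqrt_nonneg _))
  have g_pos : ∀ w ∈ W, 0 < g w := fun w hw ↦ (hμ w hw).trans_le (μ_le_g w hw)
  have g_le : ∀ w ∈ W, g w ≤ sSup (g '' W) := fun w hw ↦ le_csSup hgW (mem_image_of_mem g hw)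
  have μ_div_bdd : BddAbove ((fun w ↦ μ w / σ0) '' W) := by
    refine ⟨sSup (g '' W) / σ0, forall_mem_image.2 fun w hw ↦ ?_⟩
    have := (μ_le_g w hw).trans (g_le w hw)
    gcongr
  have sSup_pos : 0 < sSup (g '' W) :=
    (g_pos _ (hv 0 self_mem_Ici)).trans_le (g_le _ (hv 0 self_mem_Ici))
  have rate_pos : 0 < σ0 * √ε / sSup (g '' W) := by positivity
  refine ⟨rate_pos, fun t ht ↦ ?_⟩
  simpa only [sub_zero] using norm_le_exp_neg_mul_add_of_hasDerivWithinAt rate_pos hODE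
    (fun s hs ↦ div_le_div₀ (by unfold regNorm; positivity)
      (mul_le_mul_of_nonneg_left (sqrt_le_regNorm ε (v s)) hσ0.le) (g_pos _ (hv s hs))
      (g_le _ (hv s hs)))
    (fun s hs ↦ norm_bristle_forcing_le hε.le hσ0 (hμ _ (hv s hs)).le (g_pos _ (hv s hs)).le
      (le_csSup μ_div_bdd (mem_image_of_mem _ (hv s hs)))) ht

end FrictionModel

/-- Input-to-state stability estimate for the lumped FrBD bristle ODE with constant
micro-stiffness `σ0 > 0` and bounded input `|v(t)| ≤ V_max`: with
`g_max = sup_{|w| ≤ V_max} g(w)`, `μ̄_max = sup_{|w| ≤ V_max} μ(w)/σ0` and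
`λ = σ0 √ε / g_max > 0`, the solution satisfies
`|z(t)| ≤ e^{-λ t} |z₀| + μ̄_max` for all `t ≥ 0`. -/
theorem frbd_lumped_iss
    (ε μmin σ0 : ℝ) (hε : 0 < ε) (hμmin : 0 < μmin) (hσ0 : 0 < σ0)
    (μ σ1 : ℝ → ℝ)
    (hμ : ContDiff ℝ 1 μ) (hμlb : ∀ w, μmin ≤ μ w)
    (hσ1 : ContDiff ℝ 1 σ1) (hσ1nn : ∀ w, 0 ≤ σ1 w)
    (g : ℝ → ℝ) (hg : ∀ w, g w = σ1 w * Real.sqrt (w ^ 2 + ε) + μ w)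
    (v : ℝ → ℝ) (hv : ContinuousOn v (Ici 0))
    (Vmax : ℝ) (hvbd : ∀ t ∈ Ici (0 : ℝ), |v t| ≤ Vmax)
    (gmax : ℝ) (hgmax : gmax = sSup (g '' Icc (-Vmax) Vmax))
    (μbmax : ℝ) (hμbmax : μbmax = sSup ((fun w => μ w / σ0) '' Icc (-Vmax) Vmax))
    (lam : ℝ) (hlam : lam = σ0 * Real.sqrt ε / gmax)
    (z : ℝ → ℝ) (z₀ : ℝ) (hz0 : z 0 = z₀)
    (hODE : ∀ t ∈ Ici (0 : ℝ),
      HasDerivWithinAt z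
        (-(σ0 * Real.sqrt ((v t) ^ 2 + ε) / g (v t)) * z t
          + (μ (v t) / g (v t)) * v t) (Ici 0) t) :
    0 < lam ∧ ∀ t ∈ Ici (0 : ℝ), |z t| ≤ Real.exp (-lam * t) * |z₀| + μbmax := by
  subst gmax μbmax lam z₀
  have g_cont : Continuous g := by
    have := hμ.continuous
    have := hσ1.continuous
    rw [funext hg]
    fun_prop
  exact frbd_lumped_iss_general hε hσ0 (fun w _ ↦ hμmin.trans_le (hμlb w)) (fun w _ ↦ hσ1nn w)
    (fun w _ ↦ by rw [regNorm_real, hg]) (isCompact_Icc.bddAbove_image g_cont.continuousOn)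
    (fun t ht ↦ abs_le.1 (hvbd t ht))
    (by simpa only [regNorm_real, smul_eq_mul] using hODE)
end

section
/- Let T > 0, let v : [0,T] → ℝ be continuous, let V ∈ C¹([0,1]; (0,∞)), p ∈ C¹([0,1]; [0,∞)), σ0 ∈ C¹([0,1]; [0,∞)), let σ1 : ℝ × [0,1] → [0,∞) be continuous, set g(v,ξ) := σ1(v,ξ)|v|_ε + μ(v), and suppose Σ0 := σ0·p satisfies the passivity condition dΣ0/dξ (ξ) ≤ -(Σ0(ξ)/V(ξ)) dV/dξ (ξ) for all ξ ∈ [0,1]. Let z : [0,1] × [0,T] → ℝ be continuously differentiable, satisfy the boundary condition z(0,t) = 0 for all t, and satisfy the distributed FrBD PDE ∂_t z + V(ξ) ∂_ξ z = -(σ0(ξ)|v(t)|_ε/g(v(t),ξ)) z + (μ(v(t))/g(v(t),ξ)) v(t) pointwise on (0,1)×(0,T). Define μ_b(ξ,t) := σ0(ξ) z(ξ,t) + σ1(v(t),ξ)(∂_t z + V(ξ)∂_ξ z)(ξ,t), F_b(t) := L ∫_0^1 p(ξ) μ_b(ξ,t) dξ with L > 0, and W(t) := (L/2) ∫_0^1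 Σ0(ξ) z(ξ,t)² dξ. Then F_b(t) v(t) ≥ dW/dt (t) for all t ∈ (0,T). -/
open Set intervalIntegral

/-!
In the energy balance `dW/dt = L ∫ Σ0 z ∂_t z` the partial derivative `∂_t z` is first traded for
the material derivative `D = ∂_t z + V ∂_ξ z`. The price `∫ Σ0 V z ∂_ξ z` is nonnegative: by parts
it is an outflow term at `ξ = 1` minus `∫ (Σ0 V)' z² / 2`, the inflow vanishes because `z(0,t) = 0`,
and the passivity condition says exactly that the advective weight `Σ0 V` is nonincreasing. What is
left is pointwise in `ξ`: with `g = σ1 |v|_ε + μ(v)`, the PDE makes the supplied power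
`(σ0 z + σ1 D) v` exceed the elastic power `σ0 z D` by
`(σ1 μ(v) v² + |v|_ε (σ0 z)²) / g ≥ 0`.
-/

open Function MeasureTheory
open scoped Topology

theorem hasDerivAt_intervalIntegral_of_continuousOn {𝕜 E : Type*} [RCLike 𝕜]
    [NormedAddCommGroup E] [NormedSpace ℝ E] [NormedSpace 𝕜 E] {ν : Measure ℝ}
    [IsLocallyFiniteMeasure ν] {a b : ℝ} {U : Set 𝕜} {f f' : ℝ → 𝕜 → E} {t : 𝕜}
    (hU : IsOpen U) (ht : t ∈ U) (hf : ∀ s ∈ U, IntervalIntegrable (fun x => f x s) ν a b)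
    (hf' : ContinuousOn (uncurry f') (uIcc a b ×ˢ U))
    (hderiv : ∀ x ∈ uIcc a b, ∀ s ∈ U, HasDerivAt (f x) (f' x s) s) :
    HasDerivAt (fun s => ∫ x in a..b, f x s ∂ν) (∫ x in a..b, f' x t ∂ν) t := by
  obtain ⟨K, hK, htK, hKU⟩ := exists_compact_subset hU ht
  obtain ⟨C, hC⟩ := (isCompact_uIcc.prod hK).exists_bound_of_continuousOn
    (hf'.mono (prod_mono_right hKU))
  have hK_nhds : K ∈ 𝓝 t := mem_interior_iff_mem_nhds.mp htK
  refine (intervalIntegral.hasDerivAt_integral_of_dominated_loc_of_deriv_le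
    (F := fun s x => f x s) (F' := fun s x => f' x s) (bound := fun _ => C)
    hK_nhds ?_ (hf t ht) ?_ ?_ intervalIntegrable_const ?_).2
  · filter_upwards [hU.mem_nhds ht] with s hs
    exact (hf s hs).def'.aestronglyMeasurable
  · exact (hf'.uncurry_right t ht).intervalIntegrable.def'.aestronglyMeasurable
  · exact .of_forall fun x hx s hs => hC (x, s) ⟨uIoc_subset_uIcc hx, hs⟩
  · exact .of_forall fun x hx s hs => hderiv x (uIoc_subset_uIcc hx) s (hKU hs)

theorem hasDerivAt_integral_mul_sq {a b : ℝ} {U : Set ℝ} {w : ℝ → ℝ} {u u' : ℝ → ℝ → ℝ} {t : ℝ}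
    (hU : IsOpen U) (ht : t ∈ U) (hw : ContinuousOn w (uIcc a b))
    (hu : ContinuousOn (uncurry u) (uIcc a b ×ˢ U))
    (hu' : ContinuousOn (uncurry u') (uIcc a b ×ˢ U))
    (hderiv : ∀ x ∈ uIcc a b, ∀ s ∈ U, HasDerivAt (u x) (u' x s) s) :
    HasDerivAt (fun s => ∫ x in a..b, w x * u x s ^ 2)
      (2 * ∫ x in a..b, w x * (u x t * u' x t)) t := by
  have hw_prod : ContinuousOn (fun q : ℝ × ℝ => w q.1) (uIcc a b ×ˢ U) :=
    hw.comp continuousOn_fst fun _ hq => hq.1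
  rw [← intervalIntegral.integral_const_mul]
  refine hasDerivAt_intervalIntegral_of_continuousOn (f := fun x s => w x * u x s ^ 2)
    (f' := fun x s => 2 * (w x * (u x s * u' x s))) hU ht
    (fun s hs => (hw.mul ((hu.uncurry_right s hs).pow 2)).intervalIntegrable)
    (continuousOn_const.mul (hw_prod.mul (hu.mul hu'))) fun x hx s hs => ?_
  exact (((hderiv x hx s hs).pow 2).const_mul (w x)).congr_deriv (by push_cast; ring)

section Interval

variable {a b : ℝ}

theorem mul_sub_mul_le_integral_mul_deriv {w w' f f' : ℝ → ℝ} (hab : a ≤ b)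
    (hw : ContinuousOn w (Icc a b)) (hf : ContinuousOn f (Icc a b))
    (hww' : ∀ x ∈ Ioo a b, HasDerivAt w (w' x) x) (hff' : ∀ x ∈ Ioo a b, HasDerivAt f (f' x) x)
    (hf' : IntegrableOn f' (Icc a b))
    (hw'_nonpos : ∀ x ∈ Ioo a b, w' x ≤ 0) (hf_nonneg : ∀ x ∈ Ioo a b, 0 ≤ f x) :
    w b * f b - w a * f a ≤ ∫ x in a..b, w x * f' x := by
  refine sub_le_integral_of_hasDeriv_right_of_le hab (hw.mul hf)
    (fun x hx => ((hww' x hx).mul (hff' x hx)).hasDerivWithinAt)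
    (hf'.continuousOn_mul hw isCompact_Icc) fun x hx => ?_
  exact add_le_of_nonpos_left (mul_nonpos_of_nonpos_of_nonneg (hw'_nonpos x hx) (hf_nonneg x hx))

theorem integral_mul_self_mul_deriv_nonneg {w w' u u' : ℝ → ℝ} (hab : a ≤ b)
    (hw : ContinuousOn w (Icc a b)) (hu : ContinuousOn u (Icc a b))
    (hww' : ∀ x ∈ Ioo a b, HasDerivAt w (w' x) x) (huu' : ∀ x ∈ Ioo a b, HasDerivAt u (u' x) x)
    (hu' : IntegrableOn u' (Icc a b))
    (hw'_nonpos : ∀ x ∈ Ioo a b, w' x ≤ 0) (hwb : 0 ≤ w b) (hua : u a = 0) :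
    0 ≤ ∫ x in a..b, w x * (u x * u' x) := by
  have hsq : ∀ x ∈ Ioo a b, HasDerivAt (fun y => u y ^ 2 / 2) (u x * u' x) x := fun x hx =>
    (((huu' x hx).pow 2).div_const 2).congr_deriv (by push_cast; ring)
  calc 0 ≤ w b * (u b ^ 2 / 2) - w a * (u a ^ 2 / 2) := by
        rw [hua, zero_pow two_ne_zero, zero_div, mul_zero, sub_zero]
        positivity
    _ ≤ ∫ x in a..b, w x * (u x * u' x) :=
      mul_sub_mul_le_integral_mul_deriv hab hw ((hu.pow 2).div_const 2) hww' hsq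
        (hu'.continuousOn_mul hu isCompact_Icc) hw'_nonpos
        fun x _ => div_nonneg (sq_nonneg (u x)) zero_le_two

theorem integral_mul_self_mul_le_add_transport {S V u u' r : ℝ → ℝ} (hab : a ≤ b)
    (hS : DifferentiableOn ℝ S (Icc a b)) (hV : DifferentiableOn ℝ V (Icc a b))
    (hu' : ContinuousOn u' (Icc a b)) (hr : ContinuousOn r (Icc a b))
    (huu' : ∀ x ∈ Icc a b, HasDerivWithinAt u (u' x) (Icc a b) x)
    (hSb : 0 ≤ S b) (hV_pos : ∀ x ∈ Icc a b, 0 < V x)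
    (hpassive : ∀ x ∈ Ioo a b,
      derivWithin S (Icc a b) x ≤ -(S x / V x) * derivWithin V (Icc a b) x)
    (hua : u a = 0) :
    ∫ x in a..b, S x * (u x * r x) ≤ ∫ x in a..b, S x * (u x * (r x + V x * u' x)) := by
  have hu : ContinuousOn u (Icc a b) := HasDerivWithinAt.continuousOn huu'
  have hderivSV : ∀ x ∈ Ioo a b, HasDerivAt (fun y => S y * V y)
      (derivWithin S (Icc a b) x * V x + S x * derivWithin V (Icc a b) x) x := fun x hx =>
    have hx' := Ioo_subset_Icc_self hx
    ((hS x hx').hasDerivWithinAt.mul (hV x hx').hasDerivWithinAt).hasDerivAt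
      (Icc_mem_nhds hx.1 hx.2)
  have hderivSV_nonpos : ∀ x ∈ Ioo a b,
      derivWithin S (Icc a b) x * V x + S x * derivWithin V (Icc a b) x ≤ 0 := by
    intro x hx
    have hVx := hV_pos x (Ioo_subset_Icc_self hx)
    calc derivWithin S (Icc a b) x * V x + S x * derivWithin V (Icc a b) x
        ≤ -(S x / V x) * derivWithin V (Icc a b) x * V x + S x * derivWithin V (Icc a b) x := by
          gcongr
          exact hpassive x hx
      _ = 0 := by field_simp; ring
  have htransport : 0 ≤ ∫ x in a..b, S x * V x * (u x * u' x) :=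
    integral_mul_self_mul_deriv_nonneg hab (hS.continuousOn.mul hV.continuousOn) hu hderivSV
      (fun x hx => (huu' x (Ioo_subset_Icc_self hx)).hasDerivAt (Icc_mem_nhds hx.1 hx.2))
      hu'.integrableOn_Icc hderivSV_nonpos
      (mul_nonneg hSb (hV_pos b (right_mem_Icc.mpr hab)).le) hua
  calc ∫ x in a..b, S x * (u x * r x)
      ≤ (∫ x in a..b, S x * (u x * r x)) + ∫ x in a..b, S x * V x * (u x * u' x) :=
        le_add_of_nonneg_right htransport
    _ = ∫ x in a..b, S x * (u x * r x) + S x * V x * (u x * u' x) :=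
        (intervalIntegral.integral_add
          ((hS.continuousOn.mul (hu.mul hr)).intervalIntegrable_of_Icc hab)
          (((hS.continuousOn.mul hV.continuousOn).mul
            (hu.mul hu')).intervalIntegrable_of_Icc hab)).symm
    _ = ∫ x in a..b, S x * (u x * (r x + V x * u' x)) :=
        integral_congr fun x _ => by ring

theorem elasticPower_le_suppliedPower {k c s m z D v : ℝ} (hc : 0 ≤ c) (hs : 0 ≤ s) (hm : 0 < m)
    (hD : D = -(k * s / (c * s + m)) * z + m / (c * s + m) * v) :
    k * z * D ≤ (k * z + c * D) * v := by
  have hdissipation : (k * z + c * D) * v - k * z * D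
      = (c * m * v ^ 2 + s * (k * z) ^ 2) / (c * s + m) := by
    rw [hD]
    field_simp
    ring
  rw [← sub_nonneg, hdissipation]
  positivity

theorem integral_elasticPower_le_suppliedPower {p k c z D : ℝ → ℝ} {s m v : ℝ} (hab : a ≤ b)
    (hp : ContinuousOn p (Icc a b)) (hk : ContinuousOn k (Icc a b))
    (hc : ContinuousOn c (Icc a b)) (hz : ContinuousOn z (Icc a b))
    (hD : ContinuousOn D (Icc a b))
    (hp_nonneg : ∀ x ∈ Ioo a b, 0 ≤ p x) (hc_nonneg : ∀ x ∈ Ioo a b, 0 ≤ c x)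
    (hs : 0 ≤ s) (hm : 0 < m)
    (hDeq : ∀ x ∈ Ioo a b,
      D x = -(k x * s / (c x * s + m)) * z x + m / (c x * s + m) * v) :
    ∫ x in a..b, k x * p x * (z x * D x) ≤ (∫ x in a..b, p x * (k x * z x + c x * D x)) * v := by
  rw [← intervalIntegral.integral_mul_const]
  refine integral_mono_on_of_le_Ioo hab
    (((hk.mul hp).mul (hz.mul hD)).intervalIntegrable_of_Icc hab)
    (((hp.mul ((hk.mul hz).add (hc.mul hD))).mul
      continuousOn_const).intervalIntegrable_of_Icc hab) fun x hx => ?_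
  calc k x * p x * (z x * D x) = p x * (k x * z x * D x) := by ring
    _ ≤ p x * ((k x * z x + c x * D x) * v) :=
        mul_le_mul_of_nonneg_left
          (elasticPower_le_suppliedPower (hc_nonneg x hx) hs hm (hDeq x hx)) (hp_nonneg x hx)
    _ = p x * (k x * z x + c x * D x) * v := by ring

end Interval

/-- `ρ` stands for `|·|_ε`; the choice `ρ w = |w|` is the unregularized model. -/
theorem frbd_distributed_passivity_differential_general
    {T L : ℝ} (hL : 0 ≤ L) {μ ρ v : ℝ → ℝ} (hμ : ∀ w, 0 < μ w) (hρ : ∀ w, 0 ≤ ρ w)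
    {V p σ0 : ℝ → ℝ}
    (hV : DifferentiableOn ℝ V (Icc 0 1)) (hVpos : ∀ ξ ∈ Icc (0 : ℝ) 1, 0 < V ξ)
    (hp : ContinuousOn p (Icc 0 1)) (hpnn : ∀ ξ ∈ Icc (0 : ℝ) 1, 0 ≤ p ξ)
    (hσ0 : ContinuousOn σ0 (Icc 0 1)) (hσ0nn : ∀ ξ ∈ Icc (0 : ℝ) 1, 0 ≤ σ0 ξ)
    {σ1 g : ℝ → ℝ → ℝ} (hσ1 : ∀ w, ContinuousOn (σ1 w) (Icc 0 1)) (hσ1nn : ∀ w ξ, 0 ≤ σ1 w ξ)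
    (hg : ∀ w ξ, g w ξ = σ1 w ξ * ρ w + μ w)
    {Sigma0 : ℝ → ℝ} (hSigma0 : ∀ ξ, Sigma0 ξ = σ0 ξ * p ξ)
    (hSigma0_diff : DifferentiableOn ℝ Sigma0 (Icc 0 1))
    (hpassiv : ∀ ξ ∈ Icc (0 : ℝ) 1,
      derivWithin Sigma0 (Icc 0 1) ξ ≤ -(Sigma0 ξ / V ξ) * derivWithin V (Icc 0 1) ξ)
    {z zt zξ : ℝ → ℝ → ℝ}
    (hzc : ContinuousOn (uncurry z) (Icc 0 1 ×ˢ Icc 0 T))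
    (hztc : ContinuousOn (uncurry zt) (Icc 0 1 ×ˢ Icc 0 T))
    (hzξc : ContinuousOn (uncurry zξ) (Icc 0 1 ×ˢ Icc 0 T))
    (hzt : ∀ ξ ∈ Icc (0 : ℝ) 1, ∀ t ∈ Icc 0 T, HasDerivWithinAt (z ξ) (zt ξ t) (Icc 0 T) t)
    (hzξ : ∀ ξ ∈ Icc (0 : ℝ) 1, ∀ t ∈ Icc 0 T,
      HasDerivWithinAt (fun x => z x t) (zξ ξ t) (Icc 0 1) ξ)
    (hBC : ∀ t ∈ Icc 0 T, z 0 t = 0)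
    (hPDE : ∀ ξ ∈ Ioo (0 : ℝ) 1, ∀ t ∈ Ioo 0 T,
      zt ξ t + V ξ * zξ ξ t =
        -(σ0 ξ * ρ (v t) / g (v t) ξ) * z ξ t + μ (v t) / g (v t) ξ * v t)
    {Fb W : ℝ → ℝ}
    (hFb : ∀ t, Fb t = L * ∫ ξ in (0 : ℝ)..1,
      p ξ * (σ0 ξ * z ξ t + σ1 (v t) ξ * (zt ξ t + V ξ * zξ ξ t)))
    (hW : ∀ t, W t = L / 2 * ∫ ξ in (0 : ℝ)..1, Sigma0 ξ * z ξ t ^ 2) :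
    ∀ t ∈ Ioo 0 T, DifferentiableAt ℝ W t ∧ deriv W t ≤ Fb t * v t := by
  intro t ht
  have htI := Ioo_subset_Icc_self ht
  have hztc' := hztc.uncurry_right t htI
  have hzξc' := hzξc.uncurry_right t htI
  have hW' : HasDerivAt W (L * ∫ ξ in (0 : ℝ)..1, Sigma0 ξ * (z ξ t * zt ξ t)) t := by
    rw [funext hW]
    rw [← uIcc_of_le zero_le_one] at hzc hztc hzt hSigma0_diff
    refine ((hasDerivAt_integral_mul_sq isOpen_Ioo ht hSigma0_diff.continuousOn
      (hzc.mono (prod_mono_right Ioo_subset_Icc_self))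
      (hztc.mono (prod_mono_right Ioo_subset_Icc_self)) fun ξ hξ s hs =>
        (hzt ξ hξ s (Ioo_subset_Icc_self hs)).hasDerivAt
          (Icc_mem_nhds hs.1 hs.2)).const_mul (L / 2)).congr_deriv (by ring)
  have hSigma0_one : 0 ≤ Sigma0 1 := by
    have h1 : (1 : ℝ) ∈ Icc 0 1 := right_mem_Icc.mpr zero_le_one
    exact hSigma0 1 ▸ mul_nonneg (hσ0nn 1 h1) (hpnn 1 h1)
  refine ⟨hW'.differentiableAt, ?_⟩
  calc deriv W t = L * ∫ ξ in (0 : ℝ)..1, Sigma0 ξ * (z ξ t * zt ξ t) := hW'.deriv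
    _ ≤ L * ∫ ξ in (0 : ℝ)..1, Sigma0 ξ * (z ξ t * (zt ξ t + V ξ * zξ ξ t)) := by
      gcongr
      exact integral_mul_self_mul_le_add_transport zero_le_one hSigma0_diff hV hzξc' hztc'
        (fun ξ hξ => hzξ ξ hξ t htI) hSigma0_one hVpos
        (fun ξ hξ => hpassiv ξ (Ioo_subset_Icc_self hξ)) (hBC t htI)
    _ ≤ L * ((∫ ξ in (0 : ℝ)..1,
          p ξ * (σ0 ξ * z ξ t + σ1 (v t) ξ * (zt ξ t + V ξ * zξ ξ t))) * v t) := by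
      simp only [hSigma0]
      gcongr
      exact integral_elasticPower_le_suppliedPower zero_le_one hp hσ0 (hσ1 (v t))
        (hzc.uncurry_right t htI) (hztc'.add (hV.continuousOn.mul hzξc'))
        (fun ξ hξ => hpnn ξ (Ioo_subset_Icc_self hξ)) (fun ξ _ => hσ1nn (v t) ξ)
        (hρ (v t)) (hμ (v t)) fun ξ hξ => hg (v t) ξ ▸ hPDE ξ hξ t ht
    _ = Fb t * v t := by rw [hFb, mul_assoc]

/-- Passivity (differential form) of the distributed FrBD model: if the
velocity-independent micro-stiffness `Σ0 = σ0 p` satisfies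
`dΣ0/dξ ≤ -(Σ0/V) dV/dξ` on `[0,1]`, then along any `C¹` solution `z` of the distributed
FrBD PDE with boundary condition `z(0,t) = 0`, the total bristle force
`F_b(t) = L ∫_0^1 p (σ0 z + σ1(v)(∂_t z + V ∂_ξ z))` and the storage functional
`W(t) = (L/2) ∫_0^1 Σ0 z²` satisfy `F_b(t) v(t) ≥ dW/dt(t)` on `(0,T)`. -/
theorem frbd_distributed_passivity_differential
    (T L ε μmin : ℝ) (hT : 0 < T) (hL : 0 < L) (hε : 0 < ε) (hμmin : 0 < μmin)
    (μ : ℝ → ℝ) (hμ : ContDiff ℝ 1 μ) (hμlb : ∀ w, μmin ≤ μ w)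
    (v : ℝ → ℝ) (hv : ContinuousOn v (Icc 0 T))
    (V p σ0 : ℝ → ℝ)
    (hV : ContDiffOn ℝ 1 V (Icc 0 1)) (hVpos : ∀ ξ ∈ Icc (0 : ℝ) 1, 0 < V ξ)
    (hp : ContDiffOn ℝ 1 p (Icc 0 1)) (hpnn : ∀ ξ ∈ Icc (0 : ℝ) 1, 0 ≤ p ξ)
    (hσ0 : ContDiffOn ℝ 1 σ0 (Icc 0 1)) (hσ0nn : ∀ ξ ∈ Icc (0 : ℝ) 1, 0 ≤ σ0 ξ)
    (σ1 : ℝ → ℝ → ℝ) (hσ1 : Continuous fun q : ℝ × ℝ => σ1 q.1 q.2)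
    (hσ1nn : ∀ w ξ, 0 ≤ σ1 w ξ)
    (g : ℝ → ℝ → ℝ) (hg : ∀ w ξ, g w ξ = σ1 w ξ * Real.sqrt (w ^ 2 + ε) + μ w)
    (Sigma0 : ℝ → ℝ) (hSigma0 : ∀ ξ, Sigma0 ξ = σ0 ξ * p ξ)
    (hpassiv : ∀ ξ ∈ Icc (0 : ℝ) 1,
      derivWithin Sigma0 (Icc 0 1) ξ ≤ -(Sigma0 ξ / V ξ) * derivWithin V (Icc 0 1) ξ)
    (z zt zξ : ℝ → ℝ → ℝ)
    (hzc : ContinuousOn (fun q : ℝ × ℝ => z q.1 q.2) (Icc 0 1 ×ˢ Icc 0 T))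
    (hztc : ContinuousOn (fun q : ℝ × ℝ => zt q.1 q.2) (Icc 0 1 ×ˢ Icc 0 T))
    (hzξc : ContinuousOn (fun q : ℝ × ℝ => zξ q.1 q.2) (Icc 0 1 ×ˢ Icc 0 T))
    (hzt : ∀ ξ ∈ Icc (0 : ℝ) 1, ∀ t ∈ Icc (0 : ℝ) T,
      HasDerivWithinAt (fun τ => z ξ τ) (zt ξ t) (Icc 0 T) t)
    (hzξ : ∀ ξ ∈ Icc (0 : ℝ) 1, ∀ t ∈ Icc (0 : ℝ) T,
      HasDerivWithinAt (fun x => z x t) (zξ ξ t) (Icc 0 1) ξ)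
    (hBC : ∀ t ∈ Icc (0 : ℝ) T, z 0 t = 0)
    (hPDE : ∀ ξ ∈ Ioo (0 : ℝ) 1, ∀ t ∈ Ioo (0 : ℝ) T,
      zt ξ t + V ξ * zξ ξ t =
        -(σ0 ξ * Real.sqrt ((v t) ^ 2 + ε) / g (v t) ξ) * z ξ t
          + (μ (v t) / g (v t) ξ) * v t)
    (Fb : ℝ → ℝ)
    (hFb : ∀ t, Fb t = L * ∫ ξ in (0 : ℝ)..1,
      p ξ * (σ0 ξ * z ξ t + σ1 (v t) ξ * (zt ξ t + V ξ * zξ ξ t)))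
    (W : ℝ → ℝ)
    (hW : ∀ t, W t = L / 2 * ∫ ξ in (0 : ℝ)..1, Sigma0 ξ * (z ξ t) ^ 2) :
    ∀ t ∈ Ioo (0 : ℝ) T, DifferentiableAt ℝ W t ∧ deriv W t ≤ Fb t * v t :=
  frbd_distributed_passivity_differential_general hL.le (fun w => hμmin.trans_le (hμlb w))
    (fun w => Real.sqrt_nonneg (w ^ 2 + ε)) (hV.differentiableOn one_ne_zero) hVpos
    hp.continuousOn hpnn hσ0.continuousOn hσ0nn (fun w => (hσ1.uncurry_left w).continuousOn)
    hσ1nn hg hSigma0 (((hσ0.mul hp).congr fun ξ _ => hSigma0 ξ).differentiableOn one_ne_zero)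
    hpassiv hzc hztc hzξc hzt hzξ hBC hPDE hFb hW
end

section
/- Under the same hypotheses (v continuous on [0,T]; V ∈ C¹([0,1];(0,∞)); p ∈ C¹([0,1];[0,∞)); σ0 ∈ C¹([0,1];[0,∞)); σ1 : ℝ×[0,1] → [0,∞) continuous; Σ0 := σ0·p satisfying dΣ0/dξ ≤ -(Σ0/V) dV/dξ on [0,1]; z ∈ C¹([0,1]×[0,T]; ℝ) with z(0,t) = 0 solving the distributed FrBD PDE pointwise), the distributed FrBD model is passive: with F_b(t) := L∫_0^1 p(ξ)(σ0(ξ) z(ξ,t) + σ1(v(t),ξ)(∂_t z + V(ξ)∂_ξ z)(ξ,t)) dξ and W(t) := (L/2)∫_0^1 Σ0(ξ) z(ξ,t)² dξ, the inequality ∫_0^t F_b(t') v(t') dt' ≥ W(t) - W(0) holds for all t ∈ [0,T]. -/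
open Set intervalIntegral

/-!
Write `D = ∂ₜz + V ∂_ξz` and `f = σ0 z + σ1 D`. The PDE is the algebraic relation
`|v|_ε f = μ(v) (v - D)`, so the dissipated power density is a sum of squares:
`f v - σ0 z D = |v|_ε f² / μ(v) + σ1 D² ≥ 0`. Integrating against `p`, the supplied power dominates
`∫ Σ₀ z ∂ₜz + ∫ Σ₀ V z ∂_ξz`. The first integral is `W'/L`. The second is nonnegative by
integration by parts: `z` vanishes at the inlet and the micro-stiffness condition says exactly that
`Σ₀ V` is nonincreasing.
-/

section ParametricIntegral

open MeasureTheory Interval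

variable {E : Type*} [NormedAddCommGroup E] {a b c d : ℝ} {f f' : ℝ → ℝ → E}

lemma integrableOn_uncurry_uIoc_prod_uIoc
    (hf : ContinuousOn f.uncurry ([[a, b]] ×ˢ [[c, d]])) :
    IntegrableOn f.uncurry (Ι a b ×ˢ Ι c d) :=
  (hf.integrableOn_compact (isCompact_uIcc.prod isCompact_uIcc)).mono_set
    (prod_mono uIoc_subset_uIcc uIoc_subset_uIcc)

variable [NormedSpace ℝ E]

lemma intervalIntegrable_intervalIntegral (hf : IntegrableOn f.uncurry (Ι a b ×ˢ Ι c d)) :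
    IntervalIntegrable (fun y => ∫ x in a..b, f x y) volume c d := by
  rw [IntegrableOn, Measure.volume_eq_prod, ← Measure.prod_restrict] at hf
  simp only [intervalIntegral_eq_integral_uIoc, intervalIntegrable_iff]
  exact hf.integral_prod_right.smul _

variable [CompleteSpace E]

lemma integral_eq_sub_of_hasDerivWithinAt_uIcc {f f' : ℝ → E}
    (hderiv : ∀ x ∈ [[a, b]], HasDerivWithinAt f (f' x) [[a, b]] x)
    (hint : IntervalIntegrable f' volume a b) : ∫ x in a..b, f' x = f b - f a :=
  integral_eq_sub_of_hasDeriv_right (fun x hx => (hderiv x hx).continuousWithinAt)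
    (fun x hx => ((hderiv x (Ioo_subset_Icc_self hx)).hasDerivAt
      (Icc_mem_nhds hx.1 hx.2)).hasDerivWithinAt) hint

lemma integral_sub_integral_eq_integral_integral_deriv
    (hf : ContinuousOn f.uncurry ([[a, b]] ×ˢ [[c, d]]))
    (hf' : ContinuousOn f'.uncurry ([[a, b]] ×ˢ [[c, d]]))
    (hderiv : ∀ x ∈ [[a, b]], ∀ y ∈ [[c, d]], HasDerivWithinAt (f x) (f' x y) [[c, d]] y) :
    (∫ x in a..b, f x d) - ∫ x in a..b, f x c = ∫ y in c..d, ∫ x in a..b, f' x y := by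
  rw [← integral_sub (hf.uncurry_right d right_mem_uIcc).intervalIntegrable
      (hf.uncurry_right c left_mem_uIcc).intervalIntegrable,
    ← intervalIntegral_intervalIntegral_swap (integrableOn_uncurry_uIoc_prod_uIoc hf')]
  exact integral_congr fun x hx => (integral_eq_sub_of_hasDerivWithinAt_uIcc (hderiv x hx)
    (hf'.uncurry_left x hx).intervalIntegrable).symm

end ParametricIntegral

section WeightedEnergy

open MeasureTheory

lemma derivWithin_mul_nonpos_of_le_neg_div_mul {S V : ℝ → ℝ} {s : Set ℝ} {x : ℝ}
    (hS : DifferentiableWithinAt ℝ S s x) (hV : DifferentiableWithinAt ℝ V s x) (hVx : 0 < V x)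
    (h : derivWithin S s x ≤ -(S x / V x) * derivWithin V s x) :
    derivWithin (fun y => S y * V y) s x ≤ 0 := by
  rw [derivWithin_fun_mul hS hV]
  calc derivWithin S s x * V x + S x * derivWithin V s x
      ≤ -(S x / V x) * derivWithin V s x * V x + S x * derivWithin V s x := by gcongr
    _ = 0 := by field_simp; ring

lemma integral_mul_mul_deriv_nonneg {a b : ℝ} (hab : a ≤ b) {w y y' : ℝ → ℝ}
    (hw : DifferentiableOn ℝ w (Icc a b))
    (hw' : ∀ x ∈ Ioo a b, derivWithin w (Icc a b) x ≤ 0) (hwb : 0 ≤ w b)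
    (hy : ∀ x ∈ Icc a b, HasDerivWithinAt y (y' x) (Icc a b) x)
    (hy' : IntegrableOn y' (Icc a b)) (hya : y a = 0) :
    0 ≤ ∫ x in a..b, w x * (y x * y' x) := by
  have hyc : ContinuousOn y (Icc a b) := fun x hx => (hy x hx).continuousWithinAt
  have hderiv : ∀ x ∈ Ioo a b, HasDerivWithinAt (fun x => w x * (y x ^ 2 / 2))
      (derivWithin w (Icc a b) x * (y x ^ 2 / 2) + w x * (y x * y' x)) (Ioi x) x := by
    intro x hx
    have hx' := Ioo_subset_Icc_self hx
    have hwy := (hw x hx').hasDerivWithinAt.mul (((hy x hx').fun_pow 2).div_const 2)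
    refine ((hwy.hasDerivAt (Icc_mem_nhds hx.1 hx.2)).hasDerivWithinAt).congr_deriv ?_
    push_cast
    ring
  calc 0 ≤ w b * (y b ^ 2 / 2) - w a * (y a ^ 2 / 2) := by rw [hya]; ring_nf; positivity
    _ ≤ ∫ x in a..b, w x * (y x * y' x) :=
      sub_le_integral_of_hasDeriv_right_of_le hab
        (hw.continuousOn.mul ((hyc.pow 2).div_const 2)) hderiv
        ((hy'.continuousOn_mul hyc isCompact_Icc).continuousOn_mul hw.continuousOn isCompact_Icc)
        fun x hx => add_le_of_nonpos_left
          (mul_nonpos_of_nonpos_of_nonneg (hw' x hx) (by positivity))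

lemma integral_mul_mul_deriv_nonneg_of_le_neg_div_mul {a b : ℝ} (hab : a ≤ b)
    {S V y y' : ℝ → ℝ} (hS : DifferentiableOn ℝ S (Icc a b)) (hV : DifferentiableOn ℝ V (Icc a b))
    (hSb : 0 ≤ S b) (hVpos : ∀ x ∈ Icc a b, 0 < V x)
    (hSV : ∀ x ∈ Ioo a b,
      derivWithin S (Icc a b) x ≤ -(S x / V x) * derivWithin V (Icc a b) x)
    (hy : ∀ x ∈ Icc a b, HasDerivWithinAt y (y' x) (Icc a b) x)
    (hy' : IntegrableOn y' (Icc a b)) (hya : y a = 0) :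
    0 ≤ ∫ x in a..b, S x * V x * (y x * y' x) := by
  refine integral_mul_mul_deriv_nonneg hab (hS.mul hV) (fun x hx => ?_)
    (mul_nonneg hSb (hVpos b (right_mem_Icc.2 hab)).le) hy hy' hya
  have hx' := Ioo_subset_Icc_self hx
  exact derivWithin_mul_nonpos_of_le_neg_div_mul (hS x hx') (hV x hx') (hVpos x hx') (hSV x hx)

open Interval in
lemma half_integral_mul_sq_sub {a b c d : ℝ} {w : ℝ → ℝ} {y y' : ℝ → ℝ → ℝ}
    (hw : ContinuousOn w [[a, b]])
    (hy : ContinuousOn y.uncurry ([[a, b]] ×ˢ [[c, d]]))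
    (hy' : ContinuousOn y'.uncurry ([[a, b]] ×ˢ [[c, d]]))
    (hderiv : ∀ x ∈ [[a, b]], ∀ t ∈ [[c, d]], HasDerivWithinAt (y x) (y' x t) [[c, d]] t) :
    1 / 2 * (∫ x in a..b, w x * y x d ^ 2) - 1 / 2 * (∫ x in a..b, w x * y x c ^ 2) =
      ∫ t in c..d, ∫ x in a..b, w x * (y x t * y' x t) := by
  have hw₂ : ContinuousOn (fun q : ℝ × ℝ => w q.1) ([[a, b]] ×ˢ [[c, d]]) :=
    hw.comp continuousOn_fst fun q hq => hq.1
  simp only [← intervalIntegral.integral_const_mul]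
  refine integral_sub_integral_eq_integral_integral_deriv
    (f := fun x t => 1 / 2 * (w x * y x t ^ 2)) (f' := fun x t => w x * (y x t * y' x t))
    (continuousOn_const.mul (hw₂.mul (hy.pow 2))) (hw₂.mul (hy.mul hy')) fun x hx t ht => ?_
  refine ((((hderiv x hx t ht).pow 2).const_mul (w x)).const_mul (1 / 2)).congr_deriv ?_
  push_cast
  ring

end WeightedEnergy

section FrictionModel

open MeasureTheory

lemma stored_power_le_supplied_power {ρ m σ0 σ1 z D v : ℝ} (hρ : 0 ≤ ρ) (hm : 0 < m)
    (hσ1 : 0 ≤ σ1)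
    (hD : D = -(σ0 * ρ / (σ1 * ρ + m)) * z + m / (σ1 * ρ + m) * v) :
    σ0 * z * D ≤ (σ0 * z + σ1 * D) * v := by
  have hg : 0 < σ1 * ρ + m := by positivity
  have hslip : ρ * (σ0 * z + σ1 * D) = m * (v - D) := by
    field_simp [hg.ne'] at hD
    linarith
  calc σ0 * z * D ≤ σ0 * z * D + (ρ * (σ0 * z + σ1 * D) ^ 2 / m + σ1 * D ^ 2) :=
        le_add_of_nonneg_right (by positivity)
    _ = (σ0 * z + σ1 * D) * v := by
        field_simp
        linear_combination (σ0 * z + σ1 * D) * hslip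

lemma continuousOn_force_density {s I : Set ℝ} {V p σ0 v : ℝ → ℝ} {σ1 z zt zξ : ℝ → ℝ → ℝ}
    (hV : ContinuousOn V s) (hp : ContinuousOn p s) (hσ0 : ContinuousOn σ0 s)
    (hσ1 : ContinuousOn σ1.uncurry (univ ×ˢ s)) (hv : ContinuousOn v I)
    (hz : ContinuousOn z.uncurry (s ×ˢ I)) (hzt : ContinuousOn zt.uncurry (s ×ˢ I))
    (hzξ : ContinuousOn zξ.uncurry (s ×ˢ I)) :
    ContinuousOn (Function.uncurry fun ξ t =>
      p ξ * (σ0 ξ * z ξ t + σ1 (v t) ξ * (zt ξ t + V ξ * zξ ξ t))) (s ×ˢ I) := by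
  have hfst {f : ℝ → ℝ} (hf : ContinuousOn f s) : ContinuousOn (fun q => f q.1) (s ×ˢ I) :=
    hf.comp continuousOn_fst fun q hq => hq.1
  have hσ1v : ContinuousOn (fun q : ℝ × ℝ => σ1 (v q.2) q.1) (s ×ˢ I) :=
    hσ1.comp ((hv.comp continuousOn_snd fun q hq => hq.2).prodMk continuousOn_fst)
      fun q hq => ⟨mem_univ _, hq.1⟩
  exact (hfst hp).mul (((hfst hσ0).mul hz).add (hσ1v.mul (hzt.add ((hfst hV).mul hzξ))))

lemma integral_stored_power_le_supplied_power {a b ρ m v : ℝ} (hab : a ≤ b) (hρ : 0 ≤ ρ)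
    (hm : 0 < m) {V p σ0 σ1 z zt zξ : ℝ → ℝ}
    (hV : DifferentiableOn ℝ V (Icc a b)) (hVpos : ∀ ξ ∈ Icc a b, 0 < V ξ)
    (hp : DifferentiableOn ℝ p (Icc a b)) (hpnn : ∀ ξ ∈ Icc a b, 0 ≤ p ξ)
    (hσ0 : DifferentiableOn ℝ σ0 (Icc a b)) (hσ0b : 0 ≤ σ0 b)
    (hσ1 : ContinuousOn σ1 (Icc a b)) (hσ1nn : ∀ ξ ∈ Ioo a b, 0 ≤ σ1 ξ)
    (hstiff : ∀ ξ ∈ Ioo a b, derivWithin (fun x => σ0 x * p x) (Icc a b) ξ ≤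
      -(σ0 ξ * p ξ / V ξ) * derivWithin V (Icc a b) ξ)
    (hzt : ContinuousOn zt (Icc a b)) (hzξ : ContinuousOn zξ (Icc a b))
    (hz : ∀ ξ ∈ Icc a b, HasDerivWithinAt z (zξ ξ) (Icc a b) ξ) (hza : z a = 0)
    (hPDE : ∀ ξ ∈ Ioo a b, zt ξ + V ξ * zξ ξ =
      -(σ0 ξ * ρ / (σ1 ξ * ρ + m)) * z ξ + m / (σ1 ξ * ρ + m) * v) :
    ∫ ξ in a..b, σ0 ξ * p ξ * (z ξ * zt ξ) ≤
      (∫ ξ in a..b, p ξ * (σ0 ξ * z ξ + σ1 ξ * (zt ξ + V ξ * zξ ξ))) * v := by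
  have hflux : 0 ≤ ∫ ξ in a..b, σ0 ξ * p ξ * V ξ * (z ξ * zξ ξ) :=
    integral_mul_mul_deriv_nonneg_of_le_neg_div_mul hab (hσ0.mul hp) hV
      (mul_nonneg hσ0b (hpnn b (right_mem_Icc.2 hab))) hVpos hstiff hz hzξ.integrableOn_Icc hza
  have hzc : ContinuousOn z (Icc a b) := fun ξ hξ => (hz ξ hξ).continuousWithinAt
  have hw := (hσ0.mul hp).continuousOn
  have hforce := hp.continuousOn.mul ((hσ0.continuousOn.mul hzc).add
    (hσ1.mul (hzt.add (hV.continuousOn.mul hzξ))))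
  have hstored := (hw.mul (hzc.mul hzt)).intervalIntegrable_of_Icc hab (μ := volume)
  have htransport := ((hw.mul hV.continuousOn).mul (hzc.mul hzξ)).intervalIntegrable_of_Icc hab
    (μ := volume)
  have hsupplied := (hforce.intervalIntegrable_of_Icc hab (μ := volume)).mul_const v
  calc ∫ ξ in a..b, σ0 ξ * p ξ * (z ξ * zt ξ)
      ≤ (∫ ξ in a..b, σ0 ξ * p ξ * (z ξ * zt ξ)) +
          ∫ ξ in a..b, σ0 ξ * p ξ * V ξ * (z ξ * zξ ξ) := le_add_of_nonneg_right hflux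
    _ = ∫ ξ in a..b, (σ0 ξ * p ξ * (z ξ * zt ξ) + σ0 ξ * p ξ * V ξ * (z ξ * zξ ξ)) :=
        (integral_add hstored htransport).symm
    _ ≤ ∫ ξ in a..b, p ξ * (σ0 ξ * z ξ + σ1 ξ * (zt ξ + V ξ * zξ ξ)) * v := by
        refine integral_mono_on_of_le_Ioo hab (hstored.add htransport) hsupplied fun ξ hξ => ?_
        have hpower := stored_power_le_supplied_power hρ hm (hσ1nn ξ hξ) (hPDE ξ hξ)
        linarith [mul_le_mul_of_nonneg_left hpower (hpnn ξ (Ioo_subset_Icc_self hξ))]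
    _ = _ := intervalIntegral.integral_mul_const _ _

open Interval in
/-- `ρ` takes the place of the regularized absolute value `|·|_ε`. -/
theorem frbd_distributed_passivity_integral_general {T L : ℝ} (hL : 0 ≤ L)
    {μ ρ v : ℝ → ℝ} (hμ : ∀ w, 0 < μ w) (hρ : ∀ w, 0 ≤ ρ w) (hv : ContinuousOn v (Icc 0 T))
    {V p σ0 : ℝ → ℝ}
    (hV : DifferentiableOn ℝ V (Icc 0 1)) (hVpos : ∀ ξ ∈ Icc (0 : ℝ) 1, 0 < V ξ)
    (hp : DifferentiableOn ℝ p (Icc 0 1)) (hpnn : ∀ ξ ∈ Icc (0 : ℝ) 1, 0 ≤ p ξ)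
    (hσ0 : DifferentiableOn ℝ σ0 (Icc 0 1)) (hσ0nn : ∀ ξ ∈ Icc (0 : ℝ) 1, 0 ≤ σ0 ξ)
    {σ1 : ℝ → ℝ → ℝ} (hσ1 : ContinuousOn σ1.uncurry (univ ×ˢ Icc 0 1))
    (hσ1nn : ∀ w, ∀ ξ ∈ Icc (0 : ℝ) 1, 0 ≤ σ1 w ξ)
    (hstiff : ∀ ξ ∈ Icc (0 : ℝ) 1, derivWithin (fun x => σ0 x * p x) (Icc 0 1) ξ ≤
      -(σ0 ξ * p ξ / V ξ) * derivWithin V (Icc 0 1) ξ)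
    {z zt zξ : ℝ → ℝ → ℝ}
    (hzc : ContinuousOn z.uncurry (Icc 0 1 ×ˢ Icc 0 T))
    (hztc : ContinuousOn zt.uncurry (Icc 0 1 ×ˢ Icc 0 T))
    (hzξc : ContinuousOn zξ.uncurry (Icc 0 1 ×ˢ Icc 0 T))
    (hzt : ∀ ξ ∈ Icc (0 : ℝ) 1, ∀ t ∈ Icc 0 T, HasDerivWithinAt (z ξ) (zt ξ t) (Icc 0 T) t)
    (hzξ : ∀ ξ ∈ Icc (0 : ℝ) 1, ∀ t ∈ Icc 0 T,
      HasDerivWithinAt (fun x => z x t) (zξ ξ t) (Icc 0 1) ξ)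
    (hBC : ∀ t ∈ Icc 0 T, z 0 t = 0)
    (hPDE : ∀ ξ ∈ Ioo (0 : ℝ) 1, ∀ t ∈ Ioo 0 T, zt ξ t + V ξ * zξ ξ t =
      -(σ0 ξ * ρ (v t) / (σ1 (v t) ξ * ρ (v t) + μ (v t))) * z ξ t +
        μ (v t) / (σ1 (v t) ξ * ρ (v t) + μ (v t)) * v t)
    {t : ℝ} (ht : t ∈ Icc 0 T) :
    L / 2 * (∫ ξ in (0 : ℝ)..1, σ0 ξ * p ξ * z ξ t ^ 2) -
        L / 2 * (∫ ξ in (0 : ℝ)..1, σ0 ξ * p ξ * z ξ 0 ^ 2) ≤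
      ∫ s in (0 : ℝ)..t, (L * ∫ ξ in (0 : ℝ)..1,
        p ξ * (σ0 ξ * z ξ s + σ1 (v s) ξ * (zt ξ s + V ξ * zξ ξ s))) * v s := by
  have h01 : [[(0 : ℝ), 1]] = Icc 0 1 := uIcc_of_le zero_le_one
  have ht' : [[0, t]] ⊆ Icc 0 T := uIcc_of_le ht.1 ▸ Icc_subset_Icc_right ht.2
  have hrect : [[0, 1]] ×ˢ [[0, t]] ⊆ Icc (0 : ℝ) 1 ×ˢ Icc 0 T := prod_mono h01.subset ht'
  have hw : DifferentiableOn ℝ (fun ξ => σ0 ξ * p ξ) (Icc 0 1) := hσ0.mul hp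
  have hforce := continuousOn_force_density hV.continuousOn hp.continuousOn hσ0.continuousOn hσ1 hv
    hzc hztc hzξc
  have hstored := intervalIntegrable_intervalIntegral (integrableOn_uncurry_uIoc_prod_uIoc
    (f := fun ξ s => σ0 ξ * p ξ * (z ξ s * zt ξ s))
    (((hw.continuousOn.comp continuousOn_fst fun q hq => hq.1).mul (hzc.mul hztc)).mono hrect))
  have hsupplied := (intervalIntegrable_intervalIntegral (integrableOn_uncurry_uIoc_prod_uIoc
    (hforce.mono hrect))).mul_continuousOn (hv.mono ht')
  have hpower : ∀ s ∈ Ioo 0 t, ∫ ξ in (0 : ℝ)..1, σ0 ξ * p ξ * (z ξ s * zt ξ s) ≤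
      (∫ ξ in (0 : ℝ)..1,
        p ξ * (σ0 ξ * z ξ s + σ1 (v s) ξ * (zt ξ s + V ξ * zξ ξ s))) * v s := by
    intro s hs
    have hs' : s ∈ Ioo 0 T := ⟨hs.1, hs.2.trans_le ht.2⟩
    have hsI := Ioo_subset_Icc_self hs'
    exact integral_stored_power_le_supplied_power zero_le_one (hρ _) (hμ _) hV hVpos hp hpnn hσ0
      (hσ0nn 1 (right_mem_Icc.2 zero_le_one)) (hσ1.uncurry_left _ (mem_univ _))
      (fun ξ hξ => hσ1nn _ ξ (Ioo_subset_Icc_self hξ))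
      (fun ξ hξ => hstiff ξ (Ioo_subset_Icc_self hξ)) (hztc.uncurry_right s hsI)
      (hzξc.uncurry_right s hsI) (fun ξ hξ => hzξ ξ hξ s hsI) (hBC s hsI)
      (fun ξ hξ => hPDE ξ hξ s hs')
  calc _ = L * ∫ s in (0 : ℝ)..t, ∫ ξ in (0 : ℝ)..1, σ0 ξ * p ξ * (z ξ s * zt ξ s) := by
        rw [← half_integral_mul_sq_sub (hw.continuousOn.mono h01.subset) (hzc.mono hrect)
          (hztc.mono hrect) fun ξ hξ s hs => (hzt ξ (h01.subset hξ) s (ht' hs)).mono ht']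
        ring
    _ ≤ L * ∫ s in (0 : ℝ)..t, (∫ ξ in (0 : ℝ)..1,
          p ξ * (σ0 ξ * z ξ s + σ1 (v s) ξ * (zt ξ s + V ξ * zξ ξ s))) * v s :=
        mul_le_mul_of_nonneg_left (integral_mono_on_of_le_Ioo ht.1 hstored hsupplied hpower) hL
    _ = _ := by simp only [mul_assoc L, intervalIntegral.integral_const_mul]

end FrictionModel

/-- Passivity (integral form) of the distributed FrBD model: under the micro-stiffness
condition `dΣ0/dξ ≤ -(Σ0/V) dV/dξ` on `[0,1]`, any `C¹` solution `z` of the distributed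
FrBD PDE with boundary condition `z(0,t) = 0` satisfies
`∫_0^t F_b(t') v(t') dt' ≥ W(t) - W(0)` for all `t ∈ [0,T]`, where
`F_b(t) = L ∫_0^1 p (σ0 z + σ1(v)(∂_t z + V ∂_ξ z))` and `W(t) = (L/2) ∫_0^1 Σ0 z²`. -/
theorem frbd_distributed_passivity_integral
    (T L ε μmin : ℝ) (hT : 0 < T) (hL : 0 < L) (hε : 0 < ε) (hμmin : 0 < μmin)
    (μ : ℝ → ℝ) (hμ : ContDiff ℝ 1 μ) (hμlb : ∀ w, μmin ≤ μ w)
    (v : ℝ → ℝ) (hv : ContinuousOn v (Icc 0 T))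
    (V p σ0 : ℝ → ℝ)
    (hV : ContDiffOn ℝ 1 V (Icc 0 1)) (hVpos : ∀ ξ ∈ Icc (0 : ℝ) 1, 0 < V ξ)
    (hp : ContDiffOn ℝ 1 p (Icc 0 1)) (hpnn : ∀ ξ ∈ Icc (0 : ℝ) 1, 0 ≤ p ξ)
    (hσ0 : ContDiffOn ℝ 1 σ0 (Icc 0 1)) (hσ0nn : ∀ ξ ∈ Icc (0 : ℝ) 1, 0 ≤ σ0 ξ)
    (σ1 : ℝ → ℝ → ℝ) (hσ1 : Continuous fun q : ℝ × ℝ => σ1 q.1 q.2)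
    (hσ1nn : ∀ w ξ, 0 ≤ σ1 w ξ)
    (g : ℝ → ℝ → ℝ) (hg : ∀ w ξ, g w ξ = σ1 w ξ * Real.sqrt (w ^ 2 + ε) + μ w)
    (Sigma0 : ℝ → ℝ) (hSigma0 : ∀ ξ, Sigma0 ξ = σ0 ξ * p ξ)
    (hpassiv : ∀ ξ ∈ Icc (0 : ℝ) 1,
      derivWithin Sigma0 (Icc 0 1) ξ ≤ -(Sigma0 ξ / V ξ) * derivWithin V (Icc 0 1) ξ)
    (z zt zξ : ℝ → ℝ → ℝ)
    (hzc : ContinuousOn (fun q : ℝ × ℝ => z q.1 q.2) (Icc 0 1 ×ˢ Icc 0 T))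
    (hztc : ContinuousOn (fun q : ℝ × ℝ => zt q.1 q.2) (Icc 0 1 ×ˢ Icc 0 T))
    (hzξc : ContinuousOn (fun q : ℝ × ℝ => zξ q.1 q.2) (Icc 0 1 ×ˢ Icc 0 T))
    (hzt : ∀ ξ ∈ Icc (0 : ℝ) 1, ∀ t ∈ Icc (0 : ℝ) T,
      HasDerivWithinAt (fun τ => z ξ τ) (zt ξ t) (Icc 0 T) t)
    (hzξ : ∀ ξ ∈ Icc (0 : ℝ) 1, ∀ t ∈ Icc (0 : ℝ) T,
      HasDerivWithinAt (fun x => z x t) (zξ ξ t) (Icc 0 1) ξ)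
    (hBC : ∀ t ∈ Icc (0 : ℝ) T, z 0 t = 0)
    (hPDE : ∀ ξ ∈ Ioo (0 : ℝ) 1, ∀ t ∈ Ioo (0 : ℝ) T,
      zt ξ t + V ξ * zξ ξ t =
        -(σ0 ξ * Real.sqrt ((v t) ^ 2 + ε) / g (v t) ξ) * z ξ t
          + (μ (v t) / g (v t) ξ) * v t)
    (Fb : ℝ → ℝ)
    (hFb : ∀ t, Fb t = L * ∫ ξ in (0 : ℝ)..1,
      p ξ * (σ0 ξ * z ξ t + σ1 (v t) ξ * (zt ξ t + V ξ * zξ ξ t)))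
    (W : ℝ → ℝ)
    (hW : ∀ t, W t = L / 2 * ∫ ξ in (0 : ℝ)..1, Sigma0 ξ * (z ξ t) ^ 2) :
    ∀ t ∈ Icc (0 : ℝ) T, W t - W 0 ≤ ∫ s in (0 : ℝ)..t, Fb s * v s := by
  obtain rfl := funext hSigma0
  simp only [hg] at hPDE
  simp only [hFb, hW]
  exact fun t ht => frbd_distributed_passivity_integral_general hL.le
    (fun w => hμmin.trans_le (hμlb w)) (fun w => Real.sqrt_nonneg (w ^ 2 + ε)) hv
    (hV.differentiableOn one_ne_zero) hVpos (hp.differentiableOn one_ne_zero) hpnn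
    (hσ0.differentiableOn one_ne_zero) hσ0nn hσ1.continuousOn (fun w ξ _ => hσ1nn w ξ) hpassiv
    hzc hztc hzξc hzt hzξ hBC hPDE ht
end
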